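/- arXiv:1611.09279 — 2 statements merged into one kernel-verified Lean document; each statement's English description precedes it below -/
import Mathlib

section
/- Let π be a fixed-point-free permutation of {1,…,m}. For each i ∈ {1,…,m}, let E_i be the number of indices j ∈ {1,…,m} with j <_i π(j). Then E_i does not depend on i: E_i = E_{i'} for all i, i' ∈ {1,…,m}. -/
/-!
Going cyclically upwards from `σ j` to `j` takes a number of steps that does not depend on `i`.
Each step raises the position in the `i`-order by `1`, except that entering `i` from its cyclic
predecessor lowers it by `m - 1`; the walk does so once if `j <_i σ j` and never otherwise. Over
all `j` the net changes of position cancel because `σ` is a bijection, so the total number of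
steps is `m * E_i`.
-/

/-- The position of `x` in the shifted linear `i`-order on `{1,…,m}`, encoded 0-based on
`Fin m` (the element `x` represents `x+1`): `i` has position `0`, `i+1` position `1`, …
cyclically; `x <_i y` iff `shiftedPos m i x < shiftedPos m i y`. -/
def shiftedPos (m : ℕ) (i x : Fin m) : ℕ := ((x : ℕ) + m - (i : ℕ)) % m

theorem shiftedPos_eq_coe_sub (m : ℕ) (i x : Fin m) :
    shiftedPos m i x = ((x - i : Fin m) : ℕ) := by
  rw [shiftedPos, Fin.val_sub, Nat.add_sub_assoc i.is_le', Nat.add_comm]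

theorem shiftedPos_add_shiftedPos (m : ℕ) (i x y : Fin m) :
    shiftedPos m i y + shiftedPos m y x =
      shiftedPos m i x + m * if shiftedPos m i x < shiftedPos m i y then 1 else 0 := by
  have : NeZero m := i.neZero
  have x_sub_y : x - y = (x - i) - (y - i) := (sub_sub_sub_cancel_right x y i).symm
  simp only [shiftedPos_eq_coe_sub, x_sub_y]
  split_ifs with h
  · have y_sub_i_lt : ((y - i : Fin m) : ℕ) < m := (y - i).isLt
    rw [Fin.coe_sub_iff_lt.mpr (Fin.lt_def.mpr h)]
    lia
  · rw [Fin.coe_sub_iff_le.mpr (Fin.le_def.mpr (not_lt.mp h))]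
    lia

theorem mul_card_excedances_eq_sum_shiftedPos (m : ℕ) (σ : Equiv.Perm (Fin m)) (i : Fin m) :
    m * (Finset.univ.filter fun j : Fin m =>
        shiftedPos m i j < shiftedPos m i (σ j)).card = ∑ j, shiftedPos m (σ j) j := by
  refine Nat.add_left_cancel (n := ∑ j, shiftedPos m i j) ?_
  calc
    _ = ∑ j, (shiftedPos m i j +
          m * if shiftedPos m i j < shiftedPos m i (σ j) then 1 else 0) := by
      rw [Finset.sum_add_distrib, ← Finset.mul_sum, Finset.card_filter]
    _ = ∑ j, (shiftedPos m i (σ j) + shiftedPos m (σ j) j) := by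
      simp only [shiftedPos_add_shiftedPos]
    _ = ∑ j, shiftedPos m i j + ∑ j, shiftedPos m (σ j) j := by
      rw [Finset.sum_add_distrib, Equiv.sum_comp σ (shiftedPos m i)]

theorem card_weak_excedances_indep_general (m : ℕ) (σ : Equiv.Perm (Fin m)) (i i' : Fin m) :
    (Finset.univ.filter fun j : Fin m =>
        shiftedPos m i j < shiftedPos m i (σ j)).card =
      (Finset.univ.filter fun j : Fin m =>
        shiftedPos m i' j < shiftedPos m i' (σ j)).card := by
  apply Nat.eq_of_mul_eq_mul_left i.pos
  rw [mul_card_excedances_eq_sum_shiftedPos, mul_card_excedances_eq_sum_shiftedPos]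

/-- For a fixed-point-free permutation `σ` of `{1,…,m}`, the number of weak `i`-excedances
(indices `j` with `j <_i σ(j)`) does not depend on `i`. -/
theorem card_weak_excedances_indep
    (m : ℕ) (σ : Equiv.Perm (Fin m)) (hσ : ∀ j, σ j ≠ j) :
    ∀ i i' : Fin m,
      (Finset.univ.filter fun j : Fin m =>
          shiftedPos m i j < shiftedPos m i (σ j)).card =
      (Finset.univ.filter fun j : Fin m =>
          shiftedPos m i' j < shiftedPos m i' (σ j)).card :=
  card_weak_excedances_indep_general m σ
end

section
/- Let A be an n × n Dyck matrix, and let P be the partial order on {1,…,n} with i <_P j if and only if a_{i,j} = 0. Let q : {1,…,n} → ℝ satisfy q(1) < q(2) < … < q(n) and, for all i, j: i <_P j if and only if q(i) + 1 < q(j); assume moreover that the 2n real numbers q(1),…,q(n), q(1)+1,…,q(n)+1 are pairwise distinct. Label the number q(i) by n+i and the number q(i)+1 by n+1−i, and let (t_1, t_2, …, t_{2n}) be the sequence of labels obtained by listing these 2n numbers in strictly decreasing order of their values. Then t_1 = 1 and π_A^{-1}(t_k) = t_{k+1} for all 1 ≤ k ≤ 2n−1; that is, reading the endpoint labels from right to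 left on the real line yields the cycle π_A^{-1}. -/
def IsDyckMatrix {n : ℕ} (A : Matrix (Fin n) (Fin n) ℝ) : Prop :=
  (∀ i j : Fin n, A i j = 0 ∨ A i j = 1) ∧
  (∀ i j : Fin n, (j : ℕ) ≤ (i : ℕ) → A i j = 1) ∧
  (∀ i j i' j' : Fin n, A i j = 0 → (i' : ℕ) ≤ (i : ℕ) → (j : ℕ) ≤ (j' : ℕ) → A i' j' = 0)

noncomputable def psiMat {n : ℕ} (A : Matrix (Fin n) (Fin n) ℝ) :
    Matrix (Fin n) (Fin (2 * n)) ℝ :=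
  Matrix.of fun i c =>
    if hc : (c : ℕ) < n then (if (i : ℕ) = (c : ℕ) then 1 else 0)
    else (-1 : ℝ) ^ (n - 1 - (i : ℕ)) *
      A ⟨n - 1 - (i : ℕ), by have := i.isLt; omega⟩ ⟨(c : ℕ) - n, by have := c.isLt; omega⟩

/-- The `j`-th column (1-based, `1 ≤ j ≤ 2n`) of `B = ψ(A)`, as a vector. -/
noncomputable def colB {n : ℕ} (A : Matrix (Fin n) (Fin n) ℝ) (j : ℕ) : Fin n → ℝ :=
  fun r => if h : j - 1 < 2 * n then psiMat A r ⟨j - 1, h⟩ else 0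

/-- The set of principal indices `J = {j ∈ {n+1,…,2n} : B_j ≠ B_{j-1}}` (1-based). -/
def JSet {n : ℕ} (A : Matrix (Fin n) (Fin n) ℝ) : Set ℕ :=
  {j | n + 1 ≤ j ∧ j ≤ 2 * n ∧ colB A j ≠ colB A (j - 1)}

open Classical in
/-- The weight map `ω` (1-based). -/
noncomputable def omegaB {n : ℕ} (A : Matrix (Fin n) (Fin n) ℝ) (j : ℕ) : ℕ :=
  if j ≤ n then j
  else (Finset.univ.filter fun r : Fin n => colB A j r ≠ 0).card

open Classical in
/-- The map `π_A` on `{1,…,2n}` (1-based). -/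
noncomputable def piA {n : ℕ} (A : Matrix (Fin n) (Fin n) ℝ) : ℕ → ℕ := fun i =>
  if i = 1 then n + 1
  else if i ≤ n then
    (if h : ∃ j, j ∈ JSet A ∧ omegaB A j = i - 1 then h.choose else i - 1)
  else if i < 2 * n then (if i + 1 ∈ JSet A then omegaB A i else i + 1)
  else omegaB A (2 * n)

/-- The value of the interval endpoint carrying label `ℓ` (encoded 0-based: `ℓ : Fin (2n)`
represents the label `ℓ+1 ∈ {1,…,2n}`).  The left endpoint `q(i)` of the `i`-th interval is
labeled `n+i` and its right endpoint `q(i)+1` is labeled `n+1-i` (1-based `i`); so label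
`ℓ+1 ≤ n` is the right endpoint `q(n+1-(ℓ+1)) + 1` and label `ℓ+1 > n` is the left endpoint
`q(ℓ+1-n)`. -/
noncomputable def endpointVal {n : ℕ} (q : Fin n → ℝ) : Fin (2 * n) → ℝ := fun ℓ =>
  if h : (ℓ : ℕ) < n then q ⟨n - 1 - (ℓ : ℕ), by omega⟩ + 1
  else q ⟨(ℓ : ℕ) - n, by have := ℓ.isLt; omega⟩

/-!
Going from left to right, the left endpoints carry the increasing labels `n+1, …, 2n` and the right
endpoints the decreasing labels `n, …, 1`. The interval `i` ends to the right of the start of `j`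
exactly when `a_{i,j} ≠ 0`, so `ω(n+j)` counts the right endpoints beyond the left endpoint `n+j`
and is therefore the label of the nearest of them; and `n+j+1 ∈ J` exactly when some right endpoint
separates the left endpoints `n+j` and `n+j+1`. Each clause in the definition of `π_A` thus names
the endpoint immediately to the right of the given one.
-/

/-- The value `f p` is the immediate successor of `f s` among the values of `f`. For
`f = endpointVal q` this says that `p` labels the first endpoint to the right of the one
labelled `s`. -/
def IsNextAbove {ι α : Type*} [Preorder α] (f : ι → α) (s p : ι) : Prop :=
  IsLeast (Set.range f ∩ Set.Ioi (f s)) (f p)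

theorem IsNextAbove.lt {ι α : Type*} [Preorder α] {f : ι → α} {s p : ι}
    (h : IsNextAbove f s p) : f s < f p :=
  h.1.2

theorem IsNextAbove.unique {ι α : Type*} [PartialOrder α] {f : ι → α} (hf : Function.Injective f)
    {s p p' : ι} (h : IsNextAbove f s p) (h' : IsNextAbove f s p') : p = p' :=
  hf (IsLeast.unique h h')

theorem isNextAbove_of_strictAnti_comp {ι κ α : Type*} [LinearOrder κ] [Preorder α] {f : ι → α}
    {t : κ → ι} (ht : Function.Surjective t) (hanti : StrictAnti (f ∘ t)) {k l : κ} (hkl : k ⋖ l) :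
    IsNextAbove f (t l) (t k) := by
  refine ⟨⟨⟨t k, rfl⟩, hanti hkl.lt⟩, ?_⟩
  rintro _ ⟨⟨x, rfl⟩, hx⟩
  obtain ⟨m, rfl⟩ := ht x
  exact hanti.antitone (hkl.le_of_lt (hanti.lt_iff_gt.1 hx))

theorem val_lt_card_iff_mem_of_isLowerSet {n : ℕ} {S : Finset (Fin n)}
    (hS : IsLowerSet (S : Set (Fin n))) (r : Fin n) : (r : ℕ) < S.card ↔ r ∈ S := by
  constructor
  · intro hr
    by_contra hrS
    have hsub : S ⊆ Finset.Iio r := fun x hx =>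
      Finset.mem_Iio.2 (lt_of_not_ge fun hrx => hrS (hS hrx hx))
    exact hr.not_ge (by simpa using Finset.card_le_card hsub)
  · intro hr
    have hsub : Finset.Iic r ⊆ S := fun x hx => hS (Finset.mem_Iic.1 hx) hr
    simpa using Finset.card_le_card hsub

section Labels

variable {n : ℕ} {q : Fin n → ℝ}

/-- The label of the right endpoint `q i + 1` of the interval `i`, encoded 0-based as in
`endpointVal`: the paper's label `n+1-i` for the 1-based `i`. -/
def rightLabel (i : Fin n) : Fin (2 * n) :=
  ⟨i.rev, by omega⟩

/-- The label of the left endpoint `q i` of the interval `i`, encoded 0-based as in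
`endpointVal`: the paper's label `n+i` for the 1-based `i`. -/
def leftLabel (i : Fin n) : Fin (2 * n) :=
  ⟨n + i, by omega⟩

theorem coe_rightLabel (i : Fin n) : (rightLabel i : ℕ) = n - (i + 1) :=
  Fin.val_rev i

theorem coe_leftLabel (i : Fin n) : (leftLabel i : ℕ) = n + i :=
  rfl

theorem exists_rightLabel_eq {r : ℕ} (hr : r < n) : ∃ i : Fin n, (rightLabel i : ℕ) = r :=
  ⟨Fin.rev ⟨r, hr⟩, congrArg Fin.val (Fin.rev_rev ⟨r, hr⟩)⟩

theorem exists_leftLabel_eq {l : ℕ} (hl : n ≤ l) (hl' : l < 2 * n) :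
    ∃ j : Fin n, (leftLabel j : ℕ) = l :=
  ⟨⟨l - n, by omega⟩, Nat.add_sub_cancel' hl⟩

theorem eq_rightLabel_or_eq_leftLabel (s : Fin (2 * n)) :
    (∃ i, s = rightLabel i) ∨ ∃ j, s = leftLabel j := by
  rcases lt_or_ge (s : ℕ) n with hs | hs
  · exact .inl ((exists_rightLabel_eq hs).imp fun i hi => Fin.ext hi.symm)
  · exact .inr ((exists_leftLabel_eq hs s.isLt).imp fun j hj => Fin.ext hj.symm)

theorem leftLabel_eq_add_one_iff {j k : Fin n} :
    (leftLabel k : ℕ) = leftLabel j + 1 ↔ j ⋖ k := by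
  rw [Fin.covBy_iff, Nat.covBy_iff_add_one_eq, coe_leftLabel, coe_leftLabel]
  omega

theorem rightLabel_eq_add_one_iff {i k : Fin n} :
    (rightLabel i : ℕ) = rightLabel k + 1 ↔ i ⋖ k := by
  rw [Fin.covBy_iff, Nat.covBy_iff_add_one_eq, coe_rightLabel, coe_rightLabel]
  omega

theorem exists_covBy_of_rightLabel_ne_zero {i : Fin n} (hi : (rightLabel i : ℕ) ≠ 0) :
    ∃ k, i ⋖ k := by
  have hlt : (rightLabel i : ℕ) < n := i.rev.isLt
  obtain ⟨k, hk⟩ := exists_rightLabel_eq (n := n) (r := rightLabel i - 1) (by omega)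
  exact ⟨k, rightLabel_eq_add_one_iff.1 (by omega)⟩

@[simp]
theorem endpointVal_rightLabel (i : Fin n) : endpointVal q (rightLabel i) = q i + 1 := by
  have hi : n - 1 - (n - (i + 1)) = (i : ℕ) := by omega
  have hlt : n - (i + 1) < n := by omega
  simp [endpointVal, coe_rightLabel, hi, hlt]

@[simp]
theorem endpointVal_leftLabel (j : Fin n) : endpointVal q (leftLabel j) = q j := by
  simp [endpointVal, coe_leftLabel]

theorem endpointVal_le_of_val_eq_zero (hq : Monotone q) {z : Fin (2 * n)} (hz : (z : ℕ) = 0)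
    (s : Fin (2 * n)) : endpointVal q s ≤ endpointVal q z := by
  obtain ⟨i, rfl⟩ | ⟨i, rfl⟩ := eq_rightLabel_or_eq_leftLabel z
  · have hle : ∀ j, q j ≤ q i := fun j => hq (by rw [coe_rightLabel] at hz; omega)
    obtain ⟨j, rfl⟩ | ⟨j, rfl⟩ := eq_rightLabel_or_eq_leftLabel s <;>
      simp only [endpointVal_rightLabel, endpointVal_leftLabel] <;> linarith [hle j]
  · rw [coe_leftLabel] at hz
    omega

theorem isNextAbove_endpointVal {s p : Fin (2 * n)} (hlt : endpointVal q s < endpointVal q p)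
    (hright : ∀ i, endpointVal q s < q i + 1 → endpointVal q p ≤ q i + 1)
    (hleft : ∀ j, endpointVal q s < q j → endpointVal q p ≤ q j) :
    IsNextAbove (endpointVal q) s p := by
  refine ⟨⟨⟨p, rfl⟩, hlt⟩, ?_⟩
  rintro _ ⟨⟨x, rfl⟩, hx⟩
  obtain ⟨i, rfl⟩ | ⟨j, rfl⟩ := eq_rightLabel_or_eq_leftLabel x
  · simpa using hright i (by simpa using hx)
  · simpa using hleft j (by simpa using hx)

end Labels

section PiA

variable {n : ℕ} {A : Matrix (Fin n) (Fin n) ℝ}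

theorem exists_leftLabel_of_mem_JSet {m : ℕ} (hm : m ∈ JSet A) :
    ∃ j : Fin n, m = leftLabel j + 1 := by
  obtain ⟨hn, h2n, -⟩ := hm
  obtain ⟨j, hj⟩ := exists_leftLabel_eq (n := n) (l := m - 1) (by omega) (by omega)
  exact ⟨j, by omega⟩

theorem colB_leftLabel_rev (i j : Fin n) :
    colB A (leftLabel j + 1) i.rev = (-1) ^ (i : ℕ) * A i j := by
  have hi : n - 1 - (n - (i + 1)) = (i : ℕ) := by omega
  have hlt : n + j < 2 * n := by omega
  simp [colB, psiMat, coe_leftLabel, hi, hlt]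

theorem colB_leftLabel_rev_ne_zero_iff {i j : Fin n} :
    colB A (leftLabel j + 1) i.rev ≠ 0 ↔ A i j ≠ 0 := by
  simp [colB_leftLabel_rev]

theorem mem_JSet_iff_exists_entry_ne {j k : Fin n} (hjk : j ⋖ k) :
    (leftLabel k + 1 : ℕ) ∈ JSet A ↔ ∃ i, A i k ≠ A i j := by
  have hlabel := leftLabel_eq_add_one_iff.2 hjk
  have hrange : n + 1 ≤ (leftLabel k + 1 : ℕ) ∧ (leftLabel k + 1 : ℕ) ≤ 2 * n :=
    ⟨by simp only [coe_leftLabel]; omega, (leftLabel k).isLt⟩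
  calc (leftLabel k + 1 : ℕ) ∈ JSet A
      ↔ colB A (leftLabel k + 1) ≠ colB A (leftLabel j + 1) := by
        simp only [JSet, Set.mem_ofPred_eq, hrange, true_and, Nat.add_sub_cancel, ← hlabel]
    _ ↔ ∃ i : Fin n, colB A (leftLabel k + 1) i.rev ≠ colB A (leftLabel j + 1) i.rev := by
        rw [Function.ne_iff, Fin.rev_surjective.exists]
    _ ↔ ∃ i, A i k ≠ A i j := by
        simp [colB_leftLabel_rev]

theorem piA_leftLabel_of_notMem_JSet {j k : Fin n} (hjk : j ⋖ k)
    (hk : (leftLabel k + 1 : ℕ) ∉ JSet A) : piA A (leftLabel j + 1) = leftLabel k + 1 := by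
  have hlabel := leftLabel_eq_add_one_iff.2 hjk
  have hlt := (leftLabel k).isLt
  rw [hlabel] at hk ⊢
  have hle := coe_leftLabel j
  unfold piA
  rw [if_neg (by omega), if_neg (by omega), if_pos (by omega), if_neg hk]

theorem piA_leftLabel_of_forall_mem_JSet {j : Fin n}
    (h : ∀ k, j ⋖ k → (leftLabel k + 1 : ℕ) ∈ JSet A) :
    piA A (leftLabel j + 1) = omegaB A (leftLabel j + 1) := by
  have hle := coe_leftLabel j
  unfold piA
  rw [if_neg (by omega), if_neg (by omega)]
  split_ifs with hlt hJ
  · rfl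
  · obtain ⟨k, hk⟩ := exists_leftLabel_eq (n := n) (l := leftLabel j + 1) (by omega) (by omega)
    exact absurd (hk ▸ h k (leftLabel_eq_add_one_iff.1 hk)) hJ
  · congr 1
    omega

theorem piA_rightLabel_of_exists {i : Fin n} (hi : (rightLabel i : ℕ) ≠ 0)
    (h : ∃ m ∈ JSet A, omegaB A m = rightLabel i) :
    piA A (rightLabel i + 1) ∈ JSet A ∧ omegaB A (piA A (rightLabel i + 1)) = rightLabel i := by
  have hle := coe_rightLabel i
  have hpi : piA A (rightLabel i + 1) = h.choose := by
    unfold piA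
    rw [if_neg (by omega), if_pos (by omega)]
    exact dif_pos h
  exact hpi ▸ h.choose_spec

theorem piA_rightLabel_of_not_exists {i k : Fin n} (hik : i ⋖ k)
    (h : ¬∃ m ∈ JSet A, omegaB A m = rightLabel i) :
    piA A (rightLabel i + 1) = rightLabel k + 1 := by
  have hlabel := rightLabel_eq_add_one_iff.2 hik
  have hle := coe_rightLabel i
  unfold piA
  rw [if_neg (by omega), if_pos (by omega), ← hlabel]
  exact dif_neg h

end PiA

namespace IsDyckMatrix

variable {n : ℕ} {A : Matrix (Fin n) (Fin n) ℝ}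

theorem lt_of_eq_zero (hA : IsDyckMatrix A) {i j : Fin n} (h : A i j = 0) : i < j := by
  by_contra hji
  simp [hA.2.1 i j (not_lt.1 hji)] at h

theorem eq_zero_of_le (hA : IsDyckMatrix A) {i i' j j' : Fin n} (h : A i j = 0) (hi : i' ≤ i)
    (hj : j ≤ j') : A i' j' = 0 :=
  hA.2.2 i j i' j' h hi hj

theorem rightLabel_lt_omegaB_iff (hA : IsDyckMatrix A) {i j : Fin n} :
    (rightLabel i : ℕ) < omegaB A (leftLabel j + 1) ↔ A i j ≠ 0 := by
  classical
  have hlower : IsLowerSet ((Finset.univ.filter fun r => colB A (leftLabel j + 1) r ≠ 0 :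
      Finset (Fin n)) : Set (Fin n)) := by
    intro r r' hr
    obtain ⟨i, rfl⟩ := Fin.rev_surjective r
    obtain ⟨i', rfl⟩ := Fin.rev_surjective r'
    simp only [Finset.coe_filter_univ, Set.mem_ofPred_eq, colB_leftLabel_rev_ne_zero_iff]
    exact mt fun h => hA.eq_zero_of_le h (Fin.rev_le_rev.1 hr) le_rfl
  have hcard := val_lt_card_iff_mem_of_isLowerSet hlower i.rev
  rw [Finset.mem_filter_univ, colB_leftLabel_rev_ne_zero_iff] at hcard
  rw [coe_rightLabel, ← Fin.val_rev, omegaB, if_neg (by simp only [coe_leftLabel]; omega)]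
  convert hcard

theorem mem_JSet_iff (hA : IsDyckMatrix A) {j k : Fin n} (hjk : j ⋖ k) :
    (leftLabel k + 1 : ℕ) ∈ JSet A ↔ ∃ i, A i j ≠ 0 ∧ A i k = 0 := by
  refine (mem_JSet_iff_exists_entry_ne hjk).trans (exists_congr fun i => ?_)
  have hmono : A i j = 0 → A i k = 0 := fun h => hA.eq_zero_of_le h le_rfl hjk.le
  rcases hA.1 i j with hj | hj <;> rcases hA.1 i k with hk | hk <;> simp_all

theorem exists_omegaB_eq_rightLabel_add_one (hA : IsDyckMatrix A) (j : Fin n) :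
    ∃ i : Fin n, omegaB A (leftLabel j + 1) = rightLabel i + 1 := by
  have hpos : (rightLabel j : ℕ) < omegaB A (leftLabel j + 1) :=
    hA.rightLabel_lt_omegaB_iff.2 fun h => (hA.lt_of_eq_zero h).false
  have hle : omegaB A (leftLabel j + 1) ≤ n := by
    rw [omegaB, if_neg (by simp only [coe_leftLabel]; omega)]
    exact (Finset.card_le_univ _).trans_eq (Fintype.card_fin n)
  obtain ⟨i, hi⟩ := exists_rightLabel_eq (n := n) (r := omegaB A (leftLabel j + 1) - 1) (by omega)
  exact ⟨i, by omega⟩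

theorem ne_zero_iff_le_of_omegaB_eq (hA : IsDyckMatrix A) {i j : Fin n}
    (hω : omegaB A (leftLabel j + 1) = rightLabel i + 1) {i' : Fin n} : A i' j ≠ 0 ↔ i ≤ i' := by
  rw [← hA.rightLabel_lt_omegaB_iff, hω, Nat.lt_succ_iff]
  exact Fin.rev_le_rev

theorem ne_zero_iff_lt_of_omegaB_eq (hA : IsDyckMatrix A) {i j : Fin n}
    (hω : omegaB A (leftLabel j + 1) = rightLabel i) {i' : Fin n} : A i' j ≠ 0 ↔ i < i' := by
  rw [← hA.rightLabel_lt_omegaB_iff, hω]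
  exact Fin.rev_lt_rev

theorem omegaB_eq_rightLabel_iff (hA : IsDyckMatrix A) {i k j : Fin n} (hik : i ⋖ k) :
    omegaB A (leftLabel j + 1) = rightLabel i ↔ A i j = 0 ∧ A k j ≠ 0 := by
  have hlabel := rightLabel_eq_add_one_iff.2 hik
  rw [← not_ne_iff (a := A i j), ← hA.rightLabel_lt_omegaB_iff, ← hA.rightLabel_lt_omegaB_iff]
  omega

end IsDyckMatrix

/-- The intervals `[q i, q i + 1]`, numbered from left to right and with pairwise distinct
endpoints, represent the partial order `i <_P j ↔ a_{i,j} = 0`: interval `i` lies entirely to the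
left of interval `j` exactly when `a_{i,j} = 0`. -/
structure IsIntervalRepresentation {n : ℕ} (A : Matrix (Fin n) (Fin n) ℝ) (q : Fin n → ℝ) :
    Prop where
  strictMono : StrictMono q
  eq_zero_iff : ∀ i j, A i j = 0 ↔ q i + 1 < q j
  injective : Function.Injective (endpointVal q)

namespace IsIntervalRepresentation

variable {n : ℕ} {A : Matrix (Fin n) (Fin n) ℝ} {q : Fin n → ℝ}

theorem ne_zero_iff (h : IsIntervalRepresentation A q) {i j : Fin n} :
    A i j ≠ 0 ↔ q j < q i + 1 := by
  have hlabel : leftLabel j ≠ rightLabel i := fun hji => by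
    have hval := congrArg Fin.val hji
    rw [coe_leftLabel, coe_rightLabel] at hval
    omega
  have hne : q j ≠ q i + 1 := by simpa using h.injective.ne hlabel
  rw [Ne, h.eq_zero_iff, not_lt, hne.le_iff_lt]

theorem isNextAbove_leftLabel_leftLabel (hA : IsDyckMatrix A) (h : IsIntervalRepresentation A q)
    {j k : Fin n} (hjk : j ⋖ k) (hk : (leftLabel k + 1 : ℕ) ∉ JSet A) :
    IsNextAbove (endpointVal q) (leftLabel j) (leftLabel k) := by
  apply isNextAbove_endpointVal <;> simp only [endpointVal_leftLabel]
  · exact h.strictMono hjk.lt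
  · intro i hi
    by_contra hki
    exact hk ((hA.mem_JSet_iff hjk).2 ⟨i, h.ne_zero_iff.2 hi, (h.eq_zero_iff i k).2 (not_le.1 hki)⟩)
  · exact fun l hl => h.strictMono.monotone (hjk.ge_of_gt (h.strictMono.lt_iff_lt.1 hl))

theorem isNextAbove_leftLabel_rightLabel (hA : IsDyckMatrix A) (h : IsIntervalRepresentation A q)
    {i j : Fin n} (hω : omegaB A (leftLabel j + 1) = rightLabel i + 1)
    (hJ : ∀ k, j ⋖ k → (leftLabel k + 1 : ℕ) ∈ JSet A) :
    IsNextAbove (endpointVal q) (leftLabel j) (rightLabel i) := by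
  have hmin : ∀ i', A i' j ≠ 0 → q i + 1 ≤ q i' + 1 := fun i' hi' =>
    add_le_add_left (h.strictMono.monotone ((hA.ne_zero_iff_le_of_omegaB_eq hω).1 hi')) 1
  apply isNextAbove_endpointVal <;> simp only [endpointVal_leftLabel, endpointVal_rightLabel]
  · exact h.ne_zero_iff.1 ((hA.ne_zero_iff_le_of_omegaB_eq hω).2 le_rfl)
  · exact fun i' hi' => hmin i' (h.ne_zero_iff.2 hi')
  · intro l hl
    obtain ⟨k, hjk, hkl⟩ := exists_covBy_le_of_lt (h.strictMono.lt_iff_lt.1 hl)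
    obtain ⟨i', hi'j, hi'k⟩ := (hA.mem_JSet_iff hjk).1 (hJ k hjk)
    calc q i + 1 ≤ q i' + 1 := hmin i' hi'j
      _ ≤ q k := ((h.eq_zero_iff i' k).1 hi'k).le
      _ ≤ q l := h.strictMono.monotone hkl

theorem isNextAbove_rightLabel_leftLabel (hA : IsDyckMatrix A) (h : IsIntervalRepresentation A q)
    {i j : Fin n} (hJ : (leftLabel j + 1 : ℕ) ∈ JSet A)
    (hω : omegaB A (leftLabel j + 1) = rightLabel i) :
    IsNextAbove (endpointVal q) (rightLabel i) (leftLabel j) := by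
  have hentry : ∀ i', A i' j ≠ 0 ↔ i < i' := fun _ => hA.ne_zero_iff_lt_of_omegaB_eq hω
  have hij : A i j = 0 := not_ne_iff.1 (mt (hentry i).1 (lt_irrefl i))
  apply isNextAbove_endpointVal <;> simp only [endpointVal_leftLabel, endpointVal_rightLabel]
  · exact (h.eq_zero_iff i j).1 hij
  · intro i' hi'
    exact (h.ne_zero_iff.1 ((hentry i').2 (h.strictMono.lt_iff_lt.1 (by linarith)))).le
  · intro l hl
    by_contra hjl
    obtain ⟨k, hlk, hkj⟩ := exists_le_covBy_of_lt (h.strictMono.lt_iff_lt.1 (not_le.1 hjl))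
    obtain ⟨i', hi'k, hi'j⟩ := (hA.mem_JSet_iff hkj).1 hJ
    have hi'i : i' ≤ i := not_lt.1 fun hlt => (hentry i').2 hlt hi'j
    exact hi'k (hA.eq_zero_of_le ((h.eq_zero_iff i l).2 hl) hi'i hlk)

theorem isNextAbove_rightLabel_rightLabel (hA : IsDyckMatrix A)
    (h : IsIntervalRepresentation A q) {i k : Fin n} (hik : i ⋖ k)
    (hJ : ¬∃ m ∈ JSet A, omegaB A m = rightLabel i) :
    IsNextAbove (endpointVal q) (rightLabel i) (rightLabel k) := by
  apply isNextAbove_endpointVal <;> simp only [endpointVal_rightLabel]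
  · linarith [h.strictMono hik.lt]
  · intro i' hi'
    have hki' : k ≤ i' := hik.ge_of_gt (h.strictMono.lt_iff_lt.1 (by linarith))
    linarith [h.strictMono.monotone hki']
  · intro l hil
    by_contra hkl
    -- The leftmost of the left endpoints lying between `q i + 1` and `q k + 1` is principal.
    obtain ⟨j, hjl, hj⟩ := exists_minimal_le_of_wellFoundedLT (fun j => A i j = 0) l
      ((h.eq_zero_iff i l).2 hil)
    have hkj : A k j ≠ 0 := mt (fun hkj => hA.eq_zero_of_le hkj le_rfl hjl)
      (h.ne_zero_iff.2 (not_le.1 hkl))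
    obtain ⟨j', -, hj'j⟩ := exists_le_covBy_of_lt (hA.lt_of_eq_zero hj.prop)
    have hij' : A i j' ≠ 0 := hj.not_prop_of_lt hj'j.lt
    exact hJ ⟨leftLabel j + 1, (hA.mem_JSet_iff hj'j).2 ⟨i, hij', hj.prop⟩,
      (hA.omegaB_eq_rightLabel_iff hik).2 ⟨hj.prop, hkj⟩⟩

theorem exists_isNextAbove_piA (hA : IsDyckMatrix A) (h : IsIntervalRepresentation A q)
    {s : Fin (2 * n)} (hs : (s : ℕ) ≠ 0) :
    ∃ p : Fin (2 * n), piA A (s + 1) = p + 1 ∧ IsNextAbove (endpointVal q) s p := by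
  obtain ⟨i, rfl⟩ | ⟨j, rfl⟩ := eq_rightLabel_or_eq_leftLabel s
  · by_cases hex : ∃ m ∈ JSet A, omegaB A m = rightLabel i
    · obtain ⟨hJ, hω⟩ := piA_rightLabel_of_exists hs hex
      obtain ⟨j, hj⟩ := exists_leftLabel_of_mem_JSet hJ
      rw [hj] at hJ hω
      exact ⟨leftLabel j, hj, h.isNextAbove_rightLabel_leftLabel hA hJ hω⟩
    · obtain ⟨k, hik⟩ := exists_covBy_of_rightLabel_ne_zero hs
      exact ⟨rightLabel k, piA_rightLabel_of_not_exists hik hex,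
        h.isNextAbove_rightLabel_rightLabel hA hik hex⟩
  · by_cases hall : ∀ k, j ⋖ k → (leftLabel k + 1 : ℕ) ∈ JSet A
    · obtain ⟨i, hω⟩ := hA.exists_omegaB_eq_rightLabel_add_one j
      exact ⟨rightLabel i, (piA_leftLabel_of_forall_mem_JSet hall).trans hω,
        h.isNextAbove_leftLabel_rightLabel hA hω hall⟩
    · push Not at hall
      obtain ⟨k, hjk, hk⟩ := hall
      exact ⟨leftLabel k, piA_leftLabel_of_notMem_JSet hjk hk,
        h.isNextAbove_leftLabel_leftLabel hA hjk hk⟩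

end IsIntervalRepresentation

/-- Reading the endpoint labels of a canonical interval representation from right to left on
the real line yields the cycle `π_A⁻¹`: if `t` enumerates the labels in strictly decreasing
order of endpoint values, then `t₁` is the label `1` and `π_A⁻¹(t_k) = t_{k+1}` (equivalently
`π_A(t_{k+1}) = t_k`) for all `k`. -/
theorem interval_representation_reads_inverse_piA
    {n : ℕ} (hn : 0 < n) (A : Matrix (Fin n) (Fin n) ℝ) (hA : IsDyckMatrix A)
    (q : Fin n → ℝ) (hq : StrictMono q)
    (hrep : ∀ i j : Fin n, A i j = 0 ↔ q i + 1 < q j)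
    (hdist : Function.Injective (endpointVal q))
    (t : Fin (2 * n) → Fin (2 * n)) (ht : Function.Bijective t)
    (hdec : ∀ k l : Fin (2 * n), k < l → endpointVal q (t l) < endpointVal q (t k)) :
    (t ⟨0, by omega⟩ : ℕ) = 0 ∧
    ∀ k : ℕ, ∀ hk : k + 1 < 2 * n,
      piA A ((t ⟨k + 1, hk⟩ : ℕ) + 1) = (t ⟨k, by omega⟩ : ℕ) + 1 := by
  have hrepr : IsIntervalRepresentation A q := ⟨hq, hrep, hdist⟩
  have hanti : StrictAnti (endpointVal q ∘ t) := fun k l hkl => hdec k l hkl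
  have hmax := fun (z : Fin (2 * n)) => endpointVal_le_of_val_eq_zero hq.monotone (z := z)
  refine ⟨?_, fun k hk => ?_⟩
  · obtain ⟨m, hm⟩ := ht.surjective ⟨0, by omega⟩
    have hle : endpointVal q (t m) ≤ endpointVal q (t ⟨0, by omega⟩) :=
      hanti.antitone (Nat.zero_le m)
    rw [hm] at hle
    exact congrArg Fin.val (hdist ((hmax _ rfl _).antisymm hle))
  · have hcov : (⟨k, by omega⟩ : Fin (2 * n)) ⋖ ⟨k + 1, hk⟩ :=
      Fin.covBy_iff.2 (Nat.covBy_iff_add_one_eq.2 rfl)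
    have hnext := isNextAbove_of_strictAnti_comp ht.surjective hanti hcov
    have hs : (t ⟨k + 1, hk⟩ : ℕ) ≠ 0 := fun hs => hnext.lt.not_ge (hmax _ hs _)
    obtain ⟨p, hp, hp_next⟩ := hrepr.exists_isNextAbove_piA hA hs
    rw [hp, hp_next.unique hdist hnext]
end
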